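/- For every integer d ≥ 1, every integer t ≥ 1, and every ε ∈ (0, 3/8], there exist an instance space X ⊆ ℝ³ and a hypothesis class H on X with VC dimension exactly 5d such that: for every m ∈ ℕ with m < 3td/(64ε) and every (possibly randomized) learning algorithm A, there exist a target h* ∈ H and a distribution D over D_{h*} with E_{S_trn~D^m}[ atk_D(t, h*, S_trn, A) ] > ε. -/

import Mathlib

open MeasureTheory ENNReal

/-- The multiset of training examples determined by a tuple of i.i.d. draws. -/
def toTrain {α : Type*} {m : ℕ} (f : Fin m → α) : Multiset α := ↑(List.ofFn f)

/-- The distribution of `m` i.i.d. draws from `D`. -/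
noncomputable def samples {α : Type*} [MeasurableSpace α] (D : Measure α) (m : ℕ) :
    Measure (Fin m → α) := Measure.pi fun _ => D

/-- The `t`-point clean-label attackable rate of a randomized learner. -/
noncomputable def atkRandT {X : Type*} [MeasurableSpace X] {Ω : Type*} [MeasurableSpace Ω]
    (t : ℕ) (D : Measure (X × Bool)) (μ : Measure Ω) (h : X → Bool)
    (S : Multiset (X × Bool)) (a : Multiset (X × Bool) → Ω → X → Bool) : ℝ≥0∞ :=
  ⨆ Adv : {f : X → Multiset (X × Bool) //
      ∀ x : X, (∀ p ∈ f x, p.2 = h p.1) ∧ (f x).card ≤ t},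
    (D.prod μ) {q : (X × Bool) × Ω | a (S + Adv.1 q.1.1) q.2 q.1.1 ≠ h q.1.1}

/-- `H` shatters the finite set `C`. -/
def Shatters {X : Type*} (H : Set (X → Bool)) (C : Finset X) : Prop :=
  ∀ f : X → Bool, ∃ h ∈ H, ∀ x ∈ C, h x = f x

/-- `H` has VC dimension exactly `d`. -/
def VCdimEq {X : Type*} (H : Set (X → Bool)) (d : ℕ) : Prop :=
  (∃ C : Finset X, C.card = d ∧ Shatters H C) ∧ ∀ C : Finset X, Shatters H C → C.card ≤ d

/-! ### The finite block construction -/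

/-- Line `s` at position `j`. -/
def lineY {t : ℕ} (s : Bool × Bool × ZMod t) (j : ZMod t) : ZMod t :=
  s.2.2 + if s.1 then j else 0

/-- The other line through position `j`, with the other sign. -/
def flipL {t : ℕ} (j : ZMod t) (s : Bool × Bool × ZMod t) : Bool × Bool × ZMod t :=
  (!s.1, !s.2.1, s.2.2 + if s.1 then j else -j)

lemma lineY_flip {t : ℕ} (s : Bool × Bool × ZMod t) (j : ZMod t) :
    lineY (flipL j s) j = lineY s j := by
  rcases s with ⟨b, c, s⟩
  cases b <;> simp [lineY, flipL]

lemma lineY_flip_iff {t : ℕ} (s : Bool × Bool × ZMod t) (j j' : ZMod t) :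
    lineY (flipL j s) j' = lineY s j' ↔ j' = j := by
  rcases s with ⟨b, c, s⟩
  cases b
  · simp only [lineY, flipL]
    constructor
    · intro h
      have : s + -j + j' = s + 0 := by simpa using h
      linear_combination this
    · rintro rfl; simp
  · simp only [lineY, flipL]
    constructor
    · intro h
      have : s + j + 0 = s + j' := by simpa using h
      linear_combination -this
    · rintro rfl; simp

lemma flipL_flipL {t : ℕ} (s : Bool × Bool × ZMod t) (j : ZMod t) :
    flipL j (flipL j s) = s := by
  rcases s with ⟨b, c, s⟩
  cases b <;> simp [flipL]

/-- The blockwise hypothesis. -/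
def hypY {d t : ℕ} (σ : Fin d → Bool × Bool × ZMod t) (p : Fin d × ZMod t × ZMod t) : Bool :=
  xor (!(σ p.1).2.1) (decide (p.2.2 = lineY (σ p.1) p.2.1))

/-- class on the blocks -/
def HY (d t : ℕ) : Set (Fin d × ZMod t × ZMod t → Bool) := Set.range hypY

lemma four_of_count (n : ℕ) (h : 2 ^ n ≤ 4 * (n + 1)) : n ≤ 4 := by
  by_contra hn
  push Not at hn
  have : ∀ k, 5 ≤ k → 4 * (k + 1) < 2 ^ k := by
    intro k hk
    induction k, hk using Nat.le_induction with
    | base => norm_num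
    | succ k hk ih => rw [pow_succ]; omega
  have := this n hn
  omega

lemma fibre_le {d t : ℕ} (i : Fin d) (C : Finset (Fin d × ZMod t × ZMod t))
    (hC : ∀ p ∈ C, p.1 = i) (hs : Shatters (HY d t) C) : C.card ≤ 4 := by
  classical
  apply four_of_count
  let g : Bool × Bool × Option C → (C → Bool) := fun x q =>
    xor (!x.2.1) (match x.2.2 with
      | none => false
      | some p => decide (q.1.2.2 - (if x.1 then q.1.2.1 else 0) =
          p.1.2.2 - (if x.1 then p.1.2.1 else 0)))
  have hg : Function.Surjective g := by
    intro f
    obtain ⟨h, ⟨σ, rfl⟩, hh⟩ := hs (fun x => if hx : x ∈ C then f ⟨x, hx⟩ else false)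
    have key : ∀ q : C, f q = xor (!(σ i).2.1) (decide (q.1.2.2 = lineY (σ i) q.1.2.1)) := by
      intro q
      have h1 := hh q.1 q.2
      simp only [hypY, q.2, dite_true, Subtype.coe_eta] at h1
      rw [← h1, hC q.1 q.2]
    by_cases hp : ∃ p : C, p.1.2.2 = lineY (σ i) p.1.2.1
    · obtain ⟨p, hp⟩ := hp
      refine ⟨((σ i).1, (σ i).2.1, some p), ?_⟩
      funext q
      rw [key q]
      simp only [g]
      congr 2
      rw [hp]
      simp only [lineY, add_sub_cancel_right, sub_eq_iff_eq_add]
    · push Not at hp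
      refine ⟨((σ i).1, (σ i).2.1, none), ?_⟩
      funext q
      rw [key q]
      simp [g, hp q]
  have := Fintype.card_le_of_surjective g hg
  simp only [Fintype.card_fun, Fintype.card_bool, Fintype.card_coe, Fintype.card_prod,
    Fintype.card_option] at this
  omega

lemma HY_le {d t : ℕ} (C : Finset (Fin d × ZMod t × ZMod t))
    (hs : Shatters (HY d t) C) : C.card ≤ 4 * d := by
  classical
  rw [Finset.card_eq_sum_card_fiberwise (f := fun p => p.1) (t := Finset.univ)
    (fun _ _ => by simp)]
  calc _ ≤ ∑ i : Fin d, 4 := by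
        apply Finset.sum_le_sum
        intro i _
        apply fibre_le i
        · intro p hp; exact (Finset.mem_filter.1 hp).2
        · intro f
          obtain ⟨h, hh, h2⟩ := hs f
          exact ⟨h, hh, fun x hx => h2 x (Finset.mem_filter.1 hx).1⟩
    _ = 4 * d := by simp [mul_comm]

/-- Padding with free points. -/
def padH {Y : Type*} (H : Set (Y → Bool)) (n : ℕ) : Set (Y ⊕ Fin n → Bool) :=
  {h | (fun y => h (Sum.inl y)) ∈ H}

lemma padH_vc {Y : Type*} (H : Set (Y → Bool)) (v n : ℕ) (h : VCdimEq H v) :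
    VCdimEq (padH H n) (v + n) := by
  classical
  obtain ⟨⟨C, hC, hs⟩, hmax⟩ := h
  constructor
  · refine ⟨C.disjSum Finset.univ, by simp [hC], ?_⟩
    intro f
    obtain ⟨h, hh, h2⟩ := hs (fun y => f (Sum.inl y))
    refine ⟨Sum.elim h (fun i => f (Sum.inr i)), hh, ?_⟩
    rintro (y | i) hx
    · exact h2 y (by simpa using hx)
    · rfl
  · intro C hs
    have h1 : C.toLeft.card ≤ v := by
      apply hmax
      intro f
      obtain ⟨h, hh, h2⟩ := hs (Sum.elim f (fun _ => false))
      exact ⟨_, hh, fun x hx => h2 (Sum.inl x) (by simpa using hx)⟩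
    have h2 : C.toRight.card ≤ n := by
      simpa using Finset.card_le_univ C.toRight
    have := Finset.card_toLeft_add_card_toRight (u := C)
    omega

lemma transfer_vc {X Y : Type*} (φ : Y ≃ X) (H : Set (Y → Bool)) (v : ℕ) (h : VCdimEq H v) :
    VCdimEq {g : X → Bool | g ∘ φ ∈ H} v := by
  classical
  obtain ⟨⟨C, hC, hs⟩, hmax⟩ := h
  constructor
  · refine ⟨C.map φ.toEmbedding, by simp [hC], ?_⟩
    intro f
    obtain ⟨h, hh, h2⟩ := hs (f ∘ φ)
    refine ⟨h ∘ φ.symm, ?_, ?_⟩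
    · have : (h ∘ φ.symm) ∘ φ = h := by funext y; simp
      simpa [this] using hh
    · intro x hx
      obtain ⟨y, hy, rfl⟩ := Finset.mem_map.1 hx
      simpa using h2 y hy
  · intro C hs
    have := hmax (C.map φ.symm.toEmbedding) (by
      intro f
      obtain ⟨h, hh, h2⟩ := hs (f ∘ φ.symm)
      refine ⟨h ∘ φ, hh, ?_⟩
      intro y hy
      obtain ⟨x, hx, rfl⟩ := Finset.mem_map.1 hy
      simpa using h2 x hx)
    simpa using this

lemma exists_vc (d t : ℕ) : ∃ v ≤ 4 * d, VCdimEq (HY d t) v := by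
  classical
  let P : ℕ → Prop := fun n => ∃ C : Finset (Fin d × ZMod t × ZMod t), C.card = n ∧
    Shatters (HY d t) C
  have h0 : P 0 := ⟨∅, rfl, fun f => ⟨hypY (fun _ => (true, true, 0)), ⟨_, rfl⟩, by simp⟩⟩
  refine ⟨Nat.findGreatest P (4 * d), Nat.findGreatest_le _, ?_, ?_⟩
  · exact Nat.findGreatest_spec (P := P) (Nat.zero_le _) h0
  · intro C hC
    exact Nat.le_findGreatest (HY_le C hC) ⟨C, rfl, hC⟩

lemma le_prod_outer {α β : Type*} [MeasurableSpace α] [MeasurableSpace β] (μ : Measure α)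
    (ν : Measure β) [SFinite μ] [SFinite ν] (A : Set (α × β)) :
    ∫⁻ x, ν (Prod.mk x ⁻¹' A) ∂μ ≤ (μ.prod ν) A := by
  rw [← measure_toMeasurable A, Measure.prod_apply (measurableSet_toMeasurable _ _)]
  exact lintegral_mono fun x => measure_mono (Set.preimage_mono (subset_toMeasurable _ _))

/-- Index space of the samples. -/
def ZZ (d t : ℕ) : Type := Option (Fin d × ZMod t)

instance (d t : ℕ) [NeZero t] : Fintype (ZZ d t) :=
  inferInstanceAs (Fintype (Option (Fin d × ZMod t)))

instance (d t : ℕ) : MeasurableSpace (ZZ d t) := ⊤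

instance (d t : ℕ) : DiscreteMeasurableSpace (ZZ d t) := ⟨fun _ => trivial⟩

/-- weights -/
noncomputable def wt (d t : ℕ) (ε : ℝ) : ZZ d t → ℝ≥0∞
  | none => ENNReal.ofReal (1 - 8 * ε / 3)
  | some _ => ENNReal.ofReal (8 * ε / (3 * d * t))

/-- index distribution -/
noncomputable def nu (d t : ℕ) [NeZero t] (ε : ℝ) : Measure (ZZ d t) :=
  ∑ z, wt d t ε z • Measure.dirac z

lemma lintegral_nu (d t : ℕ) [NeZero t] (ε : ℝ) (f : ZZ d t → ℝ≥0∞) :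
    ∫⁻ z, f z ∂(nu d t ε) = wt d t ε none * f none +
      ENNReal.ofReal (8 * ε / (3 * d * t)) * ∑ p : Fin d × ZMod t, f (some p) := by
  unfold nu
  rw [lintegral_finsetSum_measure]
  simp only [lintegral_smul_measure, lintegral_dirac, smul_eq_mul]
  rw [show (∑ z : ZZ d t, wt d t ε z * f z) = ∑ z : Option (Fin d × ZMod t), wt d t ε z * f z
    from rfl, Fintype.sum_option, Finset.mul_sum]
  rfl

lemma nu_prob (d t : ℕ) [NeZero t] (hd : 1 ≤ d) (ε : ℝ) (hε0 : 0 < ε) (hε : ε ≤ 3 / 8) :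
    IsProbabilityMeasure (nu d t ε) := by
  constructor
  have ht : (0 : ℝ) < t := by exact_mod_cast Nat.pos_of_ne_zero (NeZero.ne t)
  have hd' : (0 : ℝ) < d := by exact_mod_cast hd
  rw [← lintegral_one, lintegral_nu]
  simp only [mul_one, wt, Finset.sum_const, Finset.card_univ, Fintype.card_prod, Fintype.card_fin,
    ZMod.card, nsmul_eq_mul]
  rw [← ENNReal.ofReal_natCast, ← ENNReal.ofReal_mul (by positivity), ← ENNReal.ofReal_add
    (by linarith) (by positivity), ← ENNReal.ofReal_one]
  congr 1
  push_cast
  field_simp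
  ring

lemma flipL_sign {t : ℕ} (j : ZMod t) (s : Bool × Bool × ZMod t) :
    (flipL j s).2.1 = !s.2.1 := rfl

section LB
open Classical

variable {d t m : ℕ} {X : Type*}

/-- location of an indexed sample -/
def pos (pt : Fin d × ZMod t × ZMod t → X) (x0 : X) (σ : Fin d → Bool × Bool × ZMod t) :
    ZZ d t → X
  | none => x0
  | some p => pt (p.1, p.2, lineY (σ p.1) p.2)

/-- swap of the target -/
noncomputable def swp (p : Fin d × ZMod t) (σ : Fin d → Bool × Bool × ZMod t) :
    Fin d → Bool × Bool × ZMod t :=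
  Function.update σ p.1 (flipL p.2 (σ p.1))

lemma swp_swp (p : Fin d × ZMod t) (σ : Fin d → Bool × Bool × ZMod t) :
    swp p (swp p σ) = σ := by
  simp [swp, flipL_flipL]

/-- sample indices in block `i` -/
noncomputable def blk (z : Fin m → ZZ d t) (i : Fin d) : Finset (Fin m) :=
  Finset.univ.filter fun k => ∃ j, z k = some (i, j)

/-- good event -/
def Good (z : Fin m → ZZ d t) (p : Fin d × ZMod t) : Prop :=
  (blk z p.1).card ≤ t ∧ ∀ k, z k ≠ some p

/-- labelled example -/
def ex (pt : Fin d × ZMod t × ZMod t → X) (x0 : X)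
    (hyp : (Fin d → Bool × Bool × ZMod t) → X → Bool)
    (σ : Fin d → Bool × Bool × ZMod t) (u : ZZ d t) : X × Bool :=
  (pos pt x0 σ u, hyp σ (pos pt x0 σ u))

lemma toTrain_split {α : Type*} (f : Fin m → α) (s : Finset (Fin m)) :
    toTrain f = s.val.map f + sᶜ.val.map f := by
  rw [← Multiset.map_add]
  have : s.val + sᶜ.val = (Finset.univ : Finset (Fin m)).val := by
    rw [← Finset.union_compl s, ← Finset.disjUnion_eq_union _ _ disjoint_compl_right]
    rfl
  rw [this]
  simp [toTrain, Fin.univ_val_map]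

variable (pt : Fin d × ZMod t × ZMod t → X) (x0 : X)
    (hyp : (Fin d → Bool × Bool × ZMod t) → X → Bool)

/-- the poison -/
noncomputable def poison (σ : Fin d → Bool × Bool × ZMod t) (z : Fin m → ZZ d t)
    (p : Fin d × ZMod t) : Multiset (X × Bool) :=
  (blk z p.1).val.map fun k =>
    (pos pt x0 (swp p σ) (z k), hyp σ (pos pt x0 (swp p σ) (z k)))

/-- the attacker -/
noncomputable def adv (σ : Fin d → Bool × Bool × ZMod t) (z : Fin m → ZZ d t) (x : X) :
    Multiset (X × Bool) :=
  if h : ∃ p, Good z p ∧ pos pt x0 σ (some p) = x then poison pt x0 hyp σ z h.choose else 0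

lemma adv_ok (σ : Fin d → Bool × Bool × ZMod t) (z : Fin m → ZZ d t) (x : X) :
    (∀ q ∈ adv pt x0 hyp σ z x, q.2 = hyp σ q.1) ∧ (adv pt x0 hyp σ z x).card ≤ t := by
  unfold adv
  split_ifs with h
  · refine ⟨?_, ?_⟩
    · intro q hq
      obtain ⟨k, -, rfl⟩ := Multiset.mem_map.1 hq
      rfl
    · simpa [poison] using h.choose_spec.1.1
  · simp

lemma adv_eq (hpt : Function.Injective pt) (σ : Fin d → Bool × Bool × ZMod t)
    (z : Fin m → ZZ d t) (p : Fin d × ZMod t) (hg : Good z p) :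
    adv pt x0 hyp σ z (pos pt x0 σ (some p)) = poison pt x0 hyp σ z p := by
  have h : ∃ q, Good z q ∧ pos pt x0 σ (some q) = pos pt x0 σ (some p) := ⟨p, hg, rfl⟩
  unfold adv
  rw [dif_pos h]
  have h2 := hpt h.choose_spec.2
  congr 1
  simp only [Prod.mk.injEq] at h2
  exact Prod.ext h2.1 h2.2.1

variable (h1 : ∀ σ p, hyp σ (pt p) = hypY σ p) (h0 : ∀ σ, hyp σ x0 = false)

lemma pos_same (σ : Fin d → Bool × Bool × ZMod t) (p : Fin d × ZMod t) :
    pos pt x0 (swp p σ) (some p) = pos pt x0 σ (some p) := by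
  simp [pos, swp, lineY_flip]

include h1

lemma hyp_diff (σ : Fin d → Bool × Bool × ZMod t) (p : Fin d × ZMod t) :
    hyp (swp p σ) (pos pt x0 σ (some p)) = ! hyp σ (pos pt x0 σ (some p)) := by
  simp [pos, h1, hypY, swp, lineY_flip, flipL_sign]

lemma hyp_agree (σ : Fin d → Bool × Bool × ZMod t) (p : Fin d × ZMod t) (j : ZMod t)
    (hj : j ≠ p.2) :
    hyp σ (pos pt x0 (swp p σ) (some (p.1, j))) =
      hyp (swp p σ) (pos pt x0 (swp p σ) (some (p.1, j))) := by
  have : lineY (flipL p.2 (σ p.1)) j ≠ lineY (σ p.1) j :=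
    (lineY_flip_iff (σ p.1) p.2 j).not.2 hj
  simp [pos, h1, hypY, swp, this, Ne.symm this, flipL_sign]

include h0

lemma data_eq (σ : Fin d → Bool × Bool × ZMod t)
    (z : Fin m → ZZ d t) (p : Fin d × ZMod t) (hg : Good z p) :
    toTrain (fun k => ex pt x0 hyp σ (z k)) + poison pt x0 hyp σ z p =
    (blk z p.1).val.map (fun k => ex pt x0 hyp σ (z k)) +
    (blk z p.1)ᶜ.val.map (fun k => ex pt x0 hyp σ (z k)) +
    (blk z p.1).val.map (fun k => ex pt x0 hyp (swp p σ) (z k)) := by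
  rw [toTrain_split _ (blk z p.1)]
  congr 1
  apply Multiset.map_congr rfl
  intro k hk
  obtain ⟨j, hj⟩ := (Finset.mem_filter.1 (show k ∈ blk z p.1 from hk)).2
  have hne : j ≠ p.2 := by
    rintro rfl
    exact hg.2 k hj
  simp only [ex, hj]
  rw [hyp_agree pt x0 hyp h1 σ p j hne]

lemma ex_off (σ : Fin d → Bool × Bool × ZMod t)
    (z : Fin m → ZZ d t) (p : Fin d × ZMod t) :
    (blk z p.1)ᶜ.val.map (fun k => ex pt x0 hyp (swp p σ) (z k)) =
    (blk z p.1)ᶜ.val.map (fun k => ex pt x0 hyp σ (z k)) := by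
  apply Multiset.map_congr rfl
  intro k hk
  have hk' : k ∉ blk z p.1 := by simpa using hk
  rcases hz : z k with _ | ⟨i, j⟩
  · simp [ex, pos, h0]
  · have hi : i ≠ p.1 := by
      rintro rfl
      exact hk' (Finset.mem_filter.2 ⟨Finset.mem_univ _, j, hz⟩)
    simp [ex, pos, h1, hypY, swp, hi]

lemma data_swap (σ : Fin d → Bool × Bool × ZMod t)
    (z : Fin m → ZZ d t) (p : Fin d × ZMod t) (hg : Good z p) :
    toTrain (fun k => ex pt x0 hyp σ (z k)) + poison pt x0 hyp σ z p =
    toTrain (fun k => ex pt x0 hyp (swp p σ) (z k)) + poison pt x0 hyp (swp p σ) z p := by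
  rw [data_eq pt x0 hyp h1 h0 σ z p hg, data_eq pt x0 hyp h1 h0 (swp p σ) z p hg, swp_swp,
    ex_off pt x0 hyp h1 h0]
  abel

end LB

section LB2
open Classical

variable {d t m : ℕ}

/-- indicator of the good event -/
noncomputable def gInd (z : Fin m → ZZ d t) : ZZ d t → ℝ≥0∞
  | none => 0
  | some p => if Good z p then 1 else 0

/-- cost bounding the bad event -/
noncomputable def cst (p : Fin d × ZMod t) (u : ZZ d t) : ℝ≥0∞ :=
  (if u = some p then 1 else 0) + (if ∃ j, u = some (p.1, j) then (t : ℝ≥0∞)⁻¹ else 0)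

lemma one_le_good [NeZero t] (z : Fin m → ZZ d t) (p : Fin d × ZMod t) :
    1 ≤ gInd z (some p) + ∑ k, cst p (z k) := by
  by_cases hg : Good z p
  · simp [gInd, hg]
  · have ht : (t : ℝ≥0∞) ≠ 0 := by exact_mod_cast NeZero.ne t
    refine le_trans ?_ le_add_self
    simp only [cst, Finset.sum_add_distrib]
    unfold Good at hg
    rw [not_and_or] at hg
    rcases hg with hg | hg
    · refine le_trans ?_ le_add_self
      have h2 : t ≤ (blk z p.1).card := by omega
      calc (1 : ℝ≥0∞) = t * (t : ℝ≥0∞)⁻¹ := (ENNReal.mul_inv_cancel ht (by simp)).symm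
        _ ≤ (blk z p.1).card * (t : ℝ≥0∞)⁻¹ := by
          gcongr
        _ = ∑ k ∈ blk z p.1, (t : ℝ≥0∞)⁻¹ := by simp
        _ = _ := by unfold blk; rw [Finset.sum_filter]
    · push Not at hg
      obtain ⟨k, hk⟩ := hg
      refine le_trans ?_ le_self_add
      refine le_trans ?_ (Finset.single_le_sum (fun _ _ => zero_le) (Finset.mem_univ k))
      rw [hk]
      exact (if_pos rfl).ge

lemma int_cst [NeZero t] (ε : ℝ) (p : Fin d × ZMod t) :
    ∫⁻ u, cst p u ∂(nu d t ε) = ENNReal.ofReal (8 * ε / (3 * d * t)) * 2 := by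
  have ht : (t : ℝ≥0∞) ≠ 0 := by exact_mod_cast NeZero.ne t
  rw [lintegral_nu]
  have e0 : cst p (none : Option (Fin d × ZMod t)) = 0 := by simp [cst]
  have e1 : ∀ q : Fin d × ZMod t, cst p (some q) =
      (if q = p then 1 else 0) + (if q.1 = p.1 then (t : ℝ≥0∞)⁻¹ else 0) := by
    intro q
    unfold cst
    congr 1
    · congr 1
      exact propext ⟨fun h => Option.some.inj h, fun h => congrArg some h⟩
    · congr 1
      refine propext ⟨?_, ?_⟩
      · rintro ⟨j, hj⟩
        have := Option.some.inj hj
        rw [this]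
      · intro h
        exact ⟨q.2, congrArg some (Prod.ext h rfl)⟩
  have e2 : ∑ q : Fin d × ZMod t, cst p (some q) = 2 := by
    rw [Finset.sum_congr rfl (fun q _ => e1 q), Finset.sum_add_distrib, Finset.sum_ite_eq',
      Fintype.sum_prod_type]
    have e3 : ∀ x : Fin d, (∑ y : ZMod t, if ((x, y) : Fin d × ZMod t).1 = p.1 then
        (t : ℝ≥0∞)⁻¹ else 0) = if x = p.1 then 1 else 0 := by
      intro x
      by_cases hx : x = p.1
      · simp [hx, ZMod.card, ENNReal.mul_inv_cancel ht]
      · simp [hx]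
    rw [Finset.sum_congr rfl (fun x _ => e3 x)]
    simp [one_add_one_eq_two]
  rw [e2]
  erw [e0]
  simp

lemma int_good [NeZero t] (hd : 1 ≤ d) (ε : ℝ) (hε0 : 0 < ε) (hε : ε ≤ 3 / 8)
    (p : Fin d × ZMod t) :
    ENNReal.ofReal (1 - m * (8 * ε / (3 * d * t) * 2)) ≤
      ∫⁻ z, gInd z (some p) ∂(Measure.pi fun _ : Fin m => nu d t ε) := by
  haveI := nu_prob d t hd ε hε0 hε
  have h : (1 : ℝ≥0∞) ≤ ∫⁻ z, (gInd z (some p) + ∑ k, cst p (z k))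
      ∂(Measure.pi fun _ : Fin m => nu d t ε) := by
    calc (1 : ℝ≥0∞) = ∫⁻ z, 1 ∂(Measure.pi fun _ : Fin m => nu d t ε) := by simp
      _ ≤ _ := lintegral_mono fun z => one_le_good z p
  rw [lintegral_add_left Measurable.of_discrete,
    lintegral_finsetSum _ (fun _ _ => Measurable.of_discrete)] at h
  have h2 : ∀ k : Fin m, ∫⁻ z, cst p (z k) ∂(Measure.pi fun _ : Fin m => nu d t ε) =
      ENNReal.ofReal (8 * ε / (3 * d * t)) * 2 := by
    intro k
    rw [← int_cst ε p]
    exact (measurePreserving_eval (fun _ : Fin m => nu d t ε) k).lintegral_comp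
      (f := cst p) Measurable.of_discrete
  simp only [h2, Finset.sum_const, Finset.card_univ, Fintype.card_fin, nsmul_eq_mul] at h
  rw [ENNReal.ofReal_sub _ (by positivity), ENNReal.ofReal_one, tsub_le_iff_right]
  convert h using 2
  rw [ENNReal.ofReal_mul (by positivity), ENNReal.ofReal_mul (by positivity)]
  simp

lemma int_int_good [NeZero t] (hd : 1 ≤ d) (ε : ℝ) (hε0 : 0 < ε) (hε : ε ≤ 3 / 8)
    (hm : (m : ℝ) < 3 * t * d / (64 * ε)) :
    2 * ENNReal.ofReal ε <
      ∫⁻ z, ∫⁻ u, gInd z u ∂(nu d t ε) ∂(Measure.pi fun _ : Fin m => nu d t ε) := by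
  haveI := nu_prob d t hd ε hε0 hε
  have ht : (0 : ℝ) < t := by exact_mod_cast Nat.pos_of_ne_zero (NeZero.ne t)
  have hd' : (0 : ℝ) < d := by exact_mod_cast hd
  rw [lintegral_lintegral_swap Measurable.of_discrete.aemeasurable, lintegral_nu]
  refine lt_of_lt_of_le ?_ le_add_self
  have hb : (m : ℝ) * (8 * ε / (3 * d * t) * 2) < 1 / 4 := by
    rw [lt_div_iff₀ (by positivity)] at hm
    have : (m : ℝ) * (8 * ε / (3 * d * t) * 2) = m * (64 * ε) / (12 * d * t) := by
      field_simp; ring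
    rw [this, div_lt_iff₀ (by positivity)]
    linarith
  set b := (m : ℝ) * (8 * ε / (3 * d * t) * 2) with hbdef
  calc 2 * ENNReal.ofReal ε = ENNReal.ofReal (2 * ε) := by
        rw [ENNReal.ofReal_mul (by norm_num)]; simp
    _ < ENNReal.ofReal (8 * ε / (3 * d * t) * ((d * t : ℕ) * (1 - b))) := by
        rw [ENNReal.ofReal_lt_ofReal_iff_of_nonneg (by positivity)]
        have : 8 * ε / (3 * d * t) * ((d * t : ℕ) * (1 - b)) = 8 * ε / 3 * (1 - b) := by
          push_cast; field_simp
        rw [this]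
        nlinarith
    _ = ENNReal.ofReal (8 * ε / (3 * d * t)) * ∑ p : Fin d × ZMod t, ENNReal.ofReal (1 - b) := by
        rw [ENNReal.ofReal_mul (by positivity), ENNReal.ofReal_mul (by positivity)]
        simp [ZMod.card]
    _ ≤ _ := by
        gcongr with p
        exact int_good hd ε hε0 hε p

theorem lb_main {X : Type*} [MeasurableSpace X] [MeasurableSingletonClass X] [Finite X]
    [NeZero t] (hd : 1 ≤ d) (ε : ℝ) (hε0 : 0 < ε) (hε : ε ≤ 3 / 8)
    (hm : (m : ℝ) < 3 * t * d / (64 * ε))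
    (pt : Fin d × ZMod t × ZMod t → X) (x0 : X)
    (hyp : (Fin d → Bool × Bool × ZMod t) → X → Bool)
    (hpt : Function.Injective pt)
    (h1 : ∀ σ p, hyp σ (pt p) = hypY σ p) (h0 : ∀ σ, hyp σ x0 = false)
    {Ω : Type*} [MeasurableSpace Ω] (μ : Measure Ω) [IsProbabilityMeasure μ]
    (a : Multiset (X × Bool) → Ω → X → Bool) :
    ∃ σ, ∃ D : Measure (X × Bool), IsProbabilityMeasure D ∧
        D {p : X × Bool | p.2 = hyp σ p.1} = 1 ∧
        ENNReal.ofReal ε <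
          ∫⁻ f, atkRandT t D μ (hyp σ) (toTrain f) a ∂(samples D m) := by
  haveI := nu_prob d t hd ε hε0 hε
  let D : (Fin d → Bool × Bool × ZMod t) → Measure (X × Bool) := fun σ =>
    (nu d t ε).map (ex pt x0 hyp σ)
  have hD : ∀ σ, IsProbabilityMeasure (D σ) := fun σ =>
    Measure.isProbabilityMeasure_map Measurable.of_discrete.aemeasurable
  let err : (Fin d → Bool × Bool × ZMod t) → (Fin m → ZZ d t) → ZZ d t → ℝ≥0∞ := fun σ z u =>
    μ {ω | a (toTrain (fun k => ex pt x0 hyp σ (z k)) + adv pt x0 hyp σ z (pos pt x0 σ u)) ω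
      (pos pt x0 σ u) ≠ hyp σ (pos pt x0 σ u)}
  have step1 : ∀ σ, ∫⁻ z, ∫⁻ u, err σ z u ∂(nu d t ε) ∂(Measure.pi fun _ : Fin m => nu d t ε) ≤
      ∫⁻ f, atkRandT t (D σ) μ (hyp σ) (toTrain f) a ∂(samples (D σ) m) := by
    intro σ
    have hs : samples (D σ) m = (Measure.pi fun _ : Fin m => nu d t ε).map
        (fun z k => ex pt x0 hyp σ (z k)) := by
      unfold samples
      haveI : ∀ i : Fin m, SigmaFinite ((nu d t ε).map (ex pt x0 hyp σ)) := fun _ => by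
        haveI := hD σ
        exact inferInstanceAs (SigmaFinite (D σ))
      rw [Measure.pi_map_pi (μ := fun _ : Fin m => nu d t ε)
        (f := fun _ => ex pt x0 hyp σ) (fun _ => Measurable.of_discrete.aemeasurable)]
    rw [hs, lintegral_map Measurable.of_discrete Measurable.of_discrete]
    refine lintegral_mono fun z => ?_
    unfold atkRandT
    refine le_trans ?_ (le_iSup _ ⟨adv pt x0 hyp σ z, adv_ok pt x0 hyp σ z⟩)
    haveI := hD σ
    refine le_trans ?_ (le_prod_outer _ _ _)
    simp only [D]
    rw [lintegral_map Measurable.of_discrete Measurable.of_discrete]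
    exact le_rfl
  have step2 : ∀ σ z p, Good z p → 1 ≤ err σ z (some p) + err (swp p σ) z (some p) := by
    intro σ z p hg
    have e1 := adv_eq pt x0 hyp hpt σ z p hg
    have e2 := adv_eq pt x0 hyp hpt (swp p σ) z p hg
    simp only [err]
    rw [e1, e2, ← data_swap pt x0 hyp h1 h0 σ z p hg, pos_same, hyp_diff pt x0 hyp h1]
    refine le_trans ?_ (measure_union_le _ _)
    rw [← measure_univ (μ := μ)]
    refine measure_mono fun ω _ => ?_
    simp only [Set.mem_union, Set.mem_ofPred_eq]
    generalize a _ ω _ = b1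
    generalize hyp σ _ = b2
    cases b1 <;> cases b2 <;> simp
  have step3 : ∀ z u, (Fintype.card (Fin d → Bool × Bool × ZMod t) : ℝ≥0∞) * gInd z u ≤
      2 * ∑ σ, err σ z u := by
    intro z u
    rcases u with _ | p
    · simp only [gInd, mul_zero, zero_le]
    · by_cases hg : Good z p
      · have e : ∑ σ, err (swp p σ) z (some p) = ∑ σ, err σ z (some p) :=
          Equiv.sum_comp (Function.Involutive.toPerm (swp p) (swp_swp p))
            (fun σ => err σ z (some p))
        calc _ = ∑ σ : Fin d → Bool × Bool × ZMod t, (1 : ℝ≥0∞) := by simp [gInd, hg]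
          _ ≤ ∑ σ, (err σ z (some p) + err (swp p σ) z (some p)) :=
            Finset.sum_le_sum fun σ _ => step2 σ z p hg
          _ = _ := by rw [Finset.sum_add_distrib, e, two_mul]
      · simp [gInd, hg]
  by_contra hcon
  push Not at hcon
  have hle : ∀ σ, ∫⁻ z, ∫⁻ u, err σ z u ∂(nu d t ε) ∂(Measure.pi fun _ : Fin m => nu d t ε) ≤
      ENNReal.ofReal ε := by
    intro σ
    refine (step1 σ).trans (hcon σ (D σ) (hD σ) ?_)
    simp only [D]
    rw [Measure.map_apply Measurable.of_discrete (MeasurableSet.of_discrete)]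
    rw [← measure_univ (μ := nu d t ε)]
    congr 1
    ext u
    simp [ex]
  have hfin := int_int_good (m := m) (t := t) hd ε hε0 hε hm
  have hcard : (Fintype.card (Fin d → Bool × Bool × ZMod t) : ℝ≥0∞) ≠ 0 := by
    exact_mod_cast Fintype.card_ne_zero
  have hlt := ENNReal.mul_lt_mul_right hcard (ENNReal.natCast_ne_top _) hfin
  refine absurd hlt (not_lt.2 ?_)
  calc _ = ∫⁻ z, ∫⁻ u, (Fintype.card (Fin d → Bool × Bool × ZMod t) : ℝ≥0∞) * gInd z u
          ∂(nu d t ε) ∂(Measure.pi fun _ : Fin m => nu d t ε) := by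
        rw [← lintegral_const_mul _ Measurable.of_discrete]
        congr 1
        funext z
        rw [← lintegral_const_mul _ Measurable.of_discrete]
    _ ≤ ∫⁻ z, ∫⁻ u, 2 * ∑ σ, err σ z u
          ∂(nu d t ε) ∂(Measure.pi fun _ : Fin m => nu d t ε) :=
        lintegral_mono fun z => lintegral_mono fun u => step3 z u
    _ = 2 * ∑ σ, ∫⁻ z, ∫⁻ u, err σ z u
          ∂(nu d t ε) ∂(Measure.pi fun _ : Fin m => nu d t ε) := by
        rw [← lintegral_finsetSum _ (fun _ _ => Measurable.of_discrete),
          ← lintegral_const_mul _ Measurable.of_discrete]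
        congr 1
        funext z
        rw [← lintegral_finsetSum _ (fun _ _ => Measurable.of_discrete),
          ← lintegral_const_mul _ Measurable.of_discrete]
    _ ≤ 2 * ∑ σ : Fin d → Bool × Bool × ZMod t, ENNReal.ofReal ε := by
        gcongr with σ
        exact hle σ
    _ = _ := by
        simp only [Finset.sum_const, Finset.card_univ, nsmul_eq_mul]
        ring

end LB2

/-- Lower bound for `t`-point clean-label attacks: for every `d ≥ 1`, `t ≥ 1` and
`ε ∈ (0, 3/8]` there is a class of VC dimension `5d` (on an instance space in `ℝ³`) on
which every learner with fewer than `3td/(64ε)` samples has expected `t`-point attackable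
rate `> ε` for some target and distribution. -/
theorem stmt11 (d t : ℕ) (hd : 1 ≤ d) (ht : 1 ≤ t) (ε : ℝ) (hε0 : 0 < ε) (hε : ε ≤ 3 / 8) :
    ∃ (Xs : Set (EuclideanSpace ℝ (Fin 3))) (H : Set (Xs → Bool)),
      VCdimEq H (5 * d) ∧
      ∀ m : ℕ, (m : ℝ) < 3 * t * d / (64 * ε) →
      ∀ (Ω : Type*) (_ : MeasurableSpace Ω) (μ : Measure Ω), IsProbabilityMeasure μ →
      ∀ a : Multiset (Xs × Bool) → Ω → Xs → Bool,
      ∃ hstar ∈ H, ∃ D : Measure (Xs × Bool), IsProbabilityMeasure D ∧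
        D {p : Xs × Bool | p.2 = hstar p.1} = 1 ∧
        ENNReal.ofReal ε <
          ∫⁻ f, atkRandT t D μ hstar (toTrain f) a ∂(samples D m) := by
  classical
  haveI : NeZero t := ⟨by omega⟩
  obtain ⟨v, hv, hvc⟩ := exists_vc d t
  obtain ⟨n, hn⟩ : ∃ n, v + n = 5 * d := ⟨5 * d - v, by omega⟩
  have hn0 : 0 < n := by omega
  obtain ⟨e⟩ : Nonempty (((Fin d × ZMod t × ZMod t) ⊕ Fin n) ↪ EuclideanSpace ℝ (Fin 3)) := by
    haveI : Infinite (EuclideanSpace ℝ (Fin 3)) := Module.Free.infinite ℝ _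
    obtain ⟨s, hs⟩ := Infinite.exists_subset_card_eq (EuclideanSpace ℝ (Fin 3))
      (Fintype.card ((Fin d × ZMod t × ZMod t) ⊕ Fin n))
    have : Fintype.card ((Fin d × ZMod t × ZMod t) ⊕ Fin n) = Fintype.card s := by simp [hs]
    exact ⟨(Fintype.equivOfCardEq this).toEmbedding.trans (Function.Embedding.subtype _)⟩
  let φ := Equiv.ofInjective e e.injective
  refine ⟨Set.range e, {g | g ∘ φ ∈ padH (HY d t) n}, ?_, ?_⟩
  · rw [← hn]
    exact transfer_vc φ _ _ (padH_vc _ _ _ hvc)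
  intro m hm Ω _ μ hμ a
  haveI : Finite (Set.range e) := Set.finite_range e
  obtain ⟨σ, D, h1, h2, h3⟩ := lb_main (X := Set.range e) hd ε hε0 hε hm
    (fun p => φ (Sum.inl p)) (φ (Sum.inr ⟨0, hn0⟩))
    (fun σ x => Sum.elim (hypY σ) (fun _ => false) (φ.symm x))
    (φ.injective.comp Sum.inl_injective) (by intro σ p; simp) (by intro σ; simp) μ a
  refine ⟨_, ?_, D, h1, h2, h3⟩
  refine ⟨σ, ?_⟩
  funext y
  simp
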